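/- arXiv:2512.04066 — 6 statements merged into one kernel-verified Lean document; each statement's English description precedes it below -/
import Mathlib

section
/- Let y : [0, ∞) → [0, ∞) be continuously differentiable and satisfy the differential inequality y'(t) ≤ −a·y(t)^p + b for all t ≥ 0, where a, b > 0 are constants and p > 1. Then for all t ≥ 0 one has y(t) ≤ (max{y(0) − (b/a)^{1/p}, 0}^{1−p} + a(p−1)t)^{−1/(p−1)} + (b/a)^{1/p}, with the conventions 1/∞ = 0 and 1/0 = ∞ (i.e., if y(0) ≤ (b/a)^{1/p} then y(t) ≤ (b/a)^{1/p} for all t ≥ 0). -/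
/-- Strict superadditivity of `x ↦ x ^ p` on the positive reals for `p > 1`. -/
theorem rpow_add_rpow_lt_add_rpow {x y p : ℝ} (hx : 0 < x) (hy : 0 < y) (hp : 1 < p) :
    x ^ p + y ^ p < (x + y) ^ p := by
  have rpow_eq_mul : ∀ z : ℝ, 0 < z → z ^ p = z * z ^ (p - 1) := fun z hz => by
    rw [Real.rpow_sub_one hz.ne']
    field_simp
  have hx_lt : x ^ (p - 1) < (x + y) ^ (p - 1) :=
    Real.rpow_lt_rpow hx.le (by linarith) (by linarith)
  have hy_lt : y ^ (p - 1) < (x + y) ^ (p - 1) :=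
    Real.rpow_lt_rpow hy.le (by linarith) (by linarith)
  rw [rpow_eq_mul x hx, rpow_eq_mul y hy, rpow_eq_mul (x + y) (by linarith), add_mul]
  gcongr

/-- `t ↦ (A + a (p - 1) t) ^ (-1 / (p - 1))` solves `w' = -a w ^ p` wherever its base is
positive. -/
theorem hasDerivAt_rpow_decay {A a p t : ℝ} (hp : 1 < p) (hpos : 0 < A + a * (p - 1) * t) :
    HasDerivAt (fun s => (A + a * (p - 1) * s) ^ (-(1 / (p - 1))))
      (-a * ((A + a * (p - 1) * t) ^ (-(1 / (p - 1)))) ^ p) t := by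
  have hp' : p - 1 ≠ 0 := by linarith
  have hlin : HasDerivAt (fun s => A + a * (p - 1) * s) (a * (p - 1)) t := by
    simpa using ((hasDerivAt_id t).const_mul (a * (p - 1))).const_add A
  convert hlin.rpow_const (p := -(1 / (p - 1))) (Or.inl hpos.ne') using 1
  rw [← Real.rpow_mul hpos.le,
    show -(1 / (p - 1)) * p = -(1 / (p - 1)) - 1 by field_simp; ring]
  field_simp

/-- A function with derivative `y'` on `[0, ∞)` stays below a differentiable barrier `B` if
`y' < B'` at every contact point. -/
theorem le_barrier_of_deriv_lt {y y' B B' : ℝ → ℝ}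
    (hy : ∀ t, 0 ≤ t → HasDerivAt y (y' t) t) (hB : ∀ t, 0 ≤ t → HasDerivAt B (B' t) t)
    (h0 : y 0 ≤ B 0) (hlt : ∀ t, 0 ≤ t → y t = B t → y' t < B' t) {t : ℝ} (ht : 0 ≤ t) :
    y t ≤ B t :=
  image_le_of_deriv_right_lt_deriv_boundary' (a := 0) (b := t)
    (fun s hs => (hy s hs.1).continuousAt.continuousWithinAt)
    (fun s hs => (hy s hs.1).hasDerivWithinAt) h0
    (fun s hs => (hB s hs.1).continuousAt.continuousWithinAt)
    (fun s hs => (hB s hs.1).hasDerivWithinAt)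
    (fun s hs => hlt s hs.1) ⟨ht, le_rfl⟩

/-- Extension of Grönwall's inequality for the scalar ODE inequality
`y' ≤ -a y^p + b` with `p > 1` and `a, b > 0`.  The `max`/convention case split
is expressed as a conjunction: if `y 0 ≤ (b/a)^(1/p)` the bound `(b/a)^(1/p)`
holds for all times, and otherwise the full algebraic-decay bound holds. -/
theorem gronwall_extension (a b p : ℝ) (ha : 0 < a) (hb : 0 < b) (hp : 1 < p)
    (y y' : ℝ → ℝ)
    (hy_nonneg : ∀ t, 0 ≤ t → 0 ≤ y t)
    (hderiv : ∀ t, 0 ≤ t → HasDerivAt y (y' t) t)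
    (hderiv_cont : ContinuousOn y' (Set.Ici (0 : ℝ)))
    (hineq : ∀ t, 0 ≤ t → y' t ≤ -a * (y t) ^ p + b) :
    (y 0 ≤ (b / a) ^ (1 / p) →
      ∀ t, 0 ≤ t → y t ≤ (b / a) ^ (1 / p)) ∧
    ((b / a) ^ (1 / p) < y 0 →
      ∀ t, 0 ≤ t →
        y t ≤ ((y 0 - (b / a) ^ (1 / p)) ^ (1 - p) + a * (p - 1) * t) ^ (-(1 / (p - 1)))
              + (b / a) ^ (1 / p)) := by
  set c := (b / a) ^ (1 / p) with hc
  have hc_pos : 0 < c := Real.rpow_pos_of_pos (div_pos hb ha) _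
  have hb_eq : b = a * c ^ p := by
    rw [hc, ← Real.rpow_mul (div_pos hb ha).le, one_div_mul_cancel (by linarith), Real.rpow_one]
    field_simp
  refine ⟨fun h0 t ht => le_of_forall_pos_le_add fun ε hε => ?_, fun h0 t ht => ?_⟩
  · refine le_barrier_of_deriv_lt (B := fun _ => c + ε) (B' := fun _ => 0) hderiv
      (fun s _ => hasDerivAt_const s _) (by linarith) (fun s hs hcontact => ?_) ht
    have hineq_s := hineq s hs
    rw [hcontact, hb_eq] at hineq_s
    have hpow : c ^ p < (c + ε) ^ p :=
      Real.rpow_lt_rpow hc_pos.le (by linarith) (by linarith)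
    nlinarith [mul_lt_mul_of_pos_left hpow ha]
  · have hgap : 0 < y 0 - c := sub_pos.2 h0
    have hbase : ∀ s, 0 ≤ s → 0 < (y 0 - c) ^ (1 - p) + a * (p - 1) * s := fun s hs =>
      add_pos_of_pos_of_nonneg (Real.rpow_pos_of_pos hgap _)
        (mul_nonneg (mul_nonneg ha.le (by linarith)) hs)
    refine le_barrier_of_deriv_lt
      (B := fun s => ((y 0 - c) ^ (1 - p) + a * (p - 1) * s) ^ (-(1 / (p - 1))) + c) hderiv
      (fun s hs => (hasDerivAt_rpow_decay hp (hbase s hs)).add_const c) ?_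
      (fun s hs hcontact => ?_) ht
    · have hp' : p - 1 ≠ 0 := by linarith
      have hexp : (1 - p) * -(1 / (p - 1)) = 1 := by field_simp; ring
      simp only [mul_zero, add_zero]
      rw [← Real.rpow_mul hgap.le, hexp, Real.rpow_one]
      linarith
    · have hineq_s := hineq s hs
      have hsuper := rpow_add_rpow_lt_add_rpow
        (Real.rpow_pos_of_pos (hbase s hs) (-(1 / (p - 1)))) hc_pos hp
      rw [hcontact, hb_eq] at hineq_s
      nlinarith [mul_lt_mul_of_pos_left hsuper ha]
end

section
/- Let k, δ, μ, c > 0 be constants and let y : [0, ∞) → [0, ∞) be continuously differentiable with y'(t) ≤ −μ·y(t)^{(k+δ)/k} + c for all t ≥ 0. Then for every t > 0, y(t) ≤ (k/(δ μ t))^{k/δ} + (c/μ)^{k/(k+δ)}. -/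
/-- Solutions of `z' ≤ -μ z ^ (1 + a)`, the inequality being required only where `z` is positive,
decay at least like `(a μ t) ^ (-1 / a)`, whatever their initial value. -/
theorem le_rpow_of_deriv_le_neg_mul_rpow {a μ : ℝ} (ha : 0 < a) (hμ : 0 < μ) {z z' : ℝ → ℝ}
    (hz : ∀ t, 0 ≤ t → HasDerivAt z (z' t) t)
    (hle : ∀ t, 0 ≤ t → 0 < z t → z' t ≤ -μ * z t ^ (1 + a)) {t : ℝ} (ht : 0 < t) :
    z t ≤ (1 / (a * μ * t)) ^ (1 / a) := by
  rcases le_or_gt (z t) 0 with hzt | hzt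
  · exact hzt.trans (by positivity)
  have hpos : ∀ s ∈ Set.Icc 0 t, 0 < z s := by
    intro s hs
    by_contra! hzs
    have hbound : z t ≤ z t / 2 := by
      refine image_le_of_deriv_right_lt_deriv_boundary' (f := z) (f' := z') (a := s) (b := t)
        (B := fun _ => z t / 2) (B' := fun _ => 0)
        (fun x hx => (hz x (hs.1.trans hx.1)).continuousAt.continuousWithinAt)
        (fun x hx => (hz x (hs.1.trans hx.1)).hasDerivWithinAt) (by linarith)
        continuousOn_const (fun x _ => hasDerivWithinAt_const _ _ _) ?_ (Set.right_mem_Icc.2 hs.2)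
      intro x hx hxe
      have hzx : 0 < z x := by rw [hxe]; linarith
      have hrpow : 0 < μ * z x ^ (1 + a) := by positivity
      linarith [hle x (hs.1.trans hx.1) hzx]
    linarith
  have hderiv : ∀ s ∈ Set.Icc 0 t, HasDerivAt (fun s => z s ^ (-a) - a * μ * s)
      (z' s * (-a) * z s ^ (-a - 1) - a * μ) s := fun s hs => by
    simpa using ((hz s hs.1).rpow_const (p := -a) (Or.inl (hpos s hs).ne')).fun_sub
      ((hasDerivAt_id s).const_mul (a * μ))
  have hmono : MonotoneOn (fun s => z s ^ (-a) - a * μ * s) (Set.Icc 0 t) := by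
    refine monotoneOn_of_hasDerivWithinAt_nonneg (convex_Icc 0 t)
      (fun s hs => (hderiv s hs).continuousAt.continuousWithinAt)
      (fun s hs => (hderiv s (interior_subset hs)).hasDerivWithinAt) fun s hs => ?_
    have hs := interior_subset hs
    have hzs := hpos s hs
    have hcancel : z s ^ (1 + a) * z s ^ (-a - 1) = 1 := by
      rw [← Real.rpow_add hzs, show 1 + a + (-a - 1) = 0 by ring, Real.rpow_zero]
    have hscaled := mul_le_mul_of_nonneg_right (hle s hs.1 hzs)
      (show 0 ≤ a * z s ^ (-a - 1) by positivity)
    linear_combination hscaled - a * μ * hcancel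
  have hgrowth := hmono (Set.left_mem_Icc.2 ht.le) (Set.right_mem_Icc.2 ht.le) ht.le
  have hinit : 0 < z 0 ^ (-a) := Real.rpow_pos_of_pos (hpos 0 (Set.left_mem_Icc.2 ht.le)) _
  have hlower : a * μ * t ≤ (z t ^ a)⁻¹ := by
    rw [← Real.rpow_neg hzt.le]
    simp only [mul_zero, sub_zero] at hgrowth
    linarith
  have hupper : z t ^ a ≤ 1 / (a * μ * t) := by
    rw [one_div]
    exact (le_inv_comm₀ (by positivity) (by positivity)).1 hlower
  calc z t = (z t ^ a) ^ (1 / a) := by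
        rw [← Real.rpow_mul hzt.le, mul_one_div_cancel ha.ne', Real.rpow_one]
    _ ≤ _ := by gcongr


/-- Analytic core of the Sobolev-regularization theorem: if
`y' ≤ -μ y^((k+δ)/k) + c` then for all `t > 0`,
`y t ≤ (k/(δ μ t))^(k/δ) + (c/μ)^(k/(k+δ))`. -/
theorem sobolev_regularization_core (k δ μ c : ℝ)
    (hk : 0 < k) (hδ : 0 < δ) (hμ : 0 < μ) (hc : 0 < c)
    (y y' : ℝ → ℝ)
    (hy_nonneg : ∀ t, 0 ≤ t → 0 ≤ y t)
    (hderiv : ∀ t, 0 ≤ t → HasDerivAt y (y' t) t)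
    (hderiv_cont : ContinuousOn y' (Set.Ici (0 : ℝ)))
    (hineq : ∀ t, 0 ≤ t → y' t ≤ -μ * (y t) ^ ((k + δ) / k) + c) :
    ∀ t, 0 < t →
      y t ≤ (k / (δ * μ * t)) ^ (k / δ) + (c / μ) ^ (k / (k + δ)) := by
  intro t ht
  set r := (c / μ) ^ (k / (k + δ)) with hr
  have hr0 : 0 ≤ r := by positivity
  have hrc : μ * r ^ ((k + δ) / k) = c := by
    rw [hr, ← Real.rpow_mul (by positivity), show k / (k + δ) * ((k + δ) / k) = 1 by field_simp,
      Real.rpow_one, mul_div_cancel₀ _ hμ.ne']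
  have hp : (k + δ) / k = 1 + δ / k := by field_simp
  have hdecay := le_rpow_of_deriv_le_neg_mul_rpow (a := δ / k) (z := fun s => y s - r) (z' := y')
    (by positivity) hμ (fun s hs => (hderiv s hs).sub_const r) (fun s hs hzs => ?_) ht
  · rw [show 1 / (δ / k * μ * t) = k / (δ * μ * t) by field_simp, one_div_div] at hdecay
    linarith
  · have hsuper := Real.add_rpow_le_rpow_add hzs.le hr0
      (show 1 ≤ 1 + δ / k by linarith [div_pos hδ hk])
    rw [sub_add_cancel] at hsuper
    have hys := hineq s hs
    rw [hp] at hys hrc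
    linear_combination hys + μ * hsuper - hrc
end

section
/- Let D ≥ 1 be an integer, let V be a finite subset of ℤ^D, let v ∈ V, and equip ℤ^D with the ℓ¹ (graph) distance dist(i, v) = ‖i − v‖₁. Then for every κ > 1 the normalization constant Z_v = ∑_{i∈V} e^{−κ·dist(v,i)} satisfies 1 ≤ Z_v ≤ e^{2D−1}/(1 − e^{−(κ−1)}). -/
/-- The two-sided geometric series centred at `a`. -/
theorem hasSum_pow_natAbs_sub {q : ℝ} (hq0 : 0 ≤ q) (hq1 : q < 1) (a : ℤ) :
    HasSum (fun n : ℤ => q ^ (n - a).natAbs) ((1 + q) / (1 - q)) := by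
  have hgeo := hasSum_geometric_of_lt_one hq0 hq1
  have hsum : HasSum (fun n : ℤ => q ^ n.natAbs) ((1 - q)⁻¹ + q * (1 - q)⁻¹) := by
    refine HasSum.of_nat_of_neg_add_one (by simpa using hgeo) ?_
    have hneg (n : ℕ) : q ^ (-((n : ℤ) + 1)).natAbs = q * q ^ n := by
      rw [show (-((n : ℤ) + 1)).natAbs = n + 1 by omega, pow_succ']
    simpa only [hneg] using hgeo.mul_left q
  have hval : (1 + q) / (1 - q) = (1 - q)⁻¹ + q * (1 - q)⁻¹ := by ring
  rw [hval]
  simpa only [Function.comp_def, Equiv.subRight_apply] using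
    (Equiv.subRight a).hasSum_iff.mpr hsum

theorem sum_exp_neg_mul_abs_sub_le {κ : ℝ} (hκ : 1 ≤ κ) (s : Finset ℤ) (a : ℤ) :
    ∑ n ∈ s, Real.exp (-κ * |(n : ℝ) - (a : ℝ)|) ≤ Real.exp 1 := by
  have hq0 : 0 < Real.exp (-κ) := Real.exp_pos _
  have he : 2.7 < Real.exp 1 := by linarith [Real.exp_one_gt_d9]
  have hqe : Real.exp (-κ) * Real.exp 1 ≤ 1 := by
    rw [← Real.exp_add]
    exact Real.exp_le_one_iff.mpr (by linarith)
  have hq : Real.exp (-κ) < 0.4 := by nlinarith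
  have hterm (n : ℤ) : Real.exp (-κ * |(n : ℝ) - (a : ℝ)|) = Real.exp (-κ) ^ (n - a).natAbs := by
    rw [← Real.exp_nat_mul, Nat.cast_natAbs, mul_comm]
    push_cast
    rfl
  calc ∑ n ∈ s, Real.exp (-κ * |(n : ℝ) - (a : ℝ)|)
      = ∑ n ∈ s, Real.exp (-κ) ^ (n - a).natAbs := Finset.sum_congr rfl fun n _ => hterm n
    _ ≤ (1 + Real.exp (-κ)) / (1 - Real.exp (-κ)) :=
        sum_le_hasSum s (fun n _ => by positivity)
          (hasSum_pow_natAbs_sub hq0.le (by linarith) a)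
    _ ≤ Real.exp 1 := by
        rw [div_le_iff₀ (by linarith)]
        linarith

theorem sum_exp_neg_mul_l1_dist_le {ι : Type*} [Fintype ι] {κ : ℝ} (hκ : 1 ≤ κ)
    (V : Finset (ι → ℤ)) (v : ι → ℤ) :
    ∑ i ∈ V, Real.exp (-κ * ∑ d, |(i d : ℝ) - (v d : ℝ)|) ≤ Real.exp 1 ^ Fintype.card ι := by
  classical
  have hV : V ⊆ Fintype.piFinset fun d => V.image fun i => i d := fun i hi =>
    Fintype.mem_piFinset.mpr fun d => Finset.mem_image_of_mem _ hi
  calc ∑ i ∈ V, Real.exp (-κ * ∑ d, |(i d : ℝ) - (v d : ℝ)|)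
      ≤ ∑ i ∈ (Fintype.piFinset fun d => V.image fun i => i d : Finset (ι → ℤ)),
          Real.exp (-κ * ∑ d, |(i d : ℝ) - (v d : ℝ)|) :=
        Finset.sum_le_sum_of_subset_of_nonneg hV fun _ _ _ => (Real.exp_pos _).le
    _ = ∏ d, ∑ n ∈ (V.image fun i => i d : Finset ℤ), Real.exp (-κ * |(n : ℝ) - (v d : ℝ)|) := by
        simp_rw [Finset.prod_univ_sum, Finset.mul_sum, Real.exp_sum]
    _ ≤ ∏ _d : ι, Real.exp 1 :=
        Finset.prod_le_prod (fun _ _ => Finset.sum_nonneg fun _ _ => (Real.exp_pos _).le)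
          fun d _ => sum_exp_neg_mul_abs_sub_le hκ _ (v d)
    _ = Real.exp 1 ^ Fintype.card ι := by simp only [Finset.prod_const, Finset.card_univ]

open Finset in
/-- Bounds on the normalization constant `Z_v = ∑_{i ∈ V} e^{-κ dist(v,i)}` of
the concentrated Sobolev norm on a finite subset `V ⊆ ℤ^D` with the `ℓ¹`
distance: `1 ≤ Z_v ≤ e^(2D-1) / (1 - e^(-(κ-1)))` for every `κ > 1`. -/
theorem normalization_constant_bounds (D : ℕ) (hD : 1 ≤ D)
    (V : Finset (Fin D → ℤ)) (v : Fin D → ℤ) (hv : v ∈ V)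
    (κ : ℝ) (hκ : 1 < κ) :
    1 ≤ ∑ i ∈ V, Real.exp (-κ * ∑ d, |(i d : ℝ) - (v d : ℝ)|) ∧
    ∑ i ∈ V, Real.exp (-κ * ∑ d, |(i d : ℝ) - (v d : ℝ)|) ≤
      Real.exp (2 * D - 1) / (1 - Real.exp (-(κ - 1))) := by
  constructor
  · calc (1 : ℝ) = Real.exp (-κ * ∑ d, |(v d : ℝ) - (v d : ℝ)|) := by simp
      _ ≤ _ := single_le_sum (f := fun i : Fin D → ℤ =>
          Real.exp (-κ * ∑ d, |(i d : ℝ) - (v d : ℝ)|)) (fun _ _ => (Real.exp_pos _).le) hv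
  · have hr : Real.exp (-(κ - 1)) < 1 := Real.exp_lt_one_iff.mpr (by linarith)
    have hD' : (1 : ℝ) ≤ D := by exact_mod_cast hD
    calc _ ≤ Real.exp 1 ^ Fintype.card (Fin D) := sum_exp_neg_mul_l1_dist_le hκ.le V v
      _ = Real.exp D := by rw [Fintype.card_fin, Real.exp_one_pow]
      _ ≤ Real.exp (2 * D - 1) := Real.exp_le_exp.mpr (by linarith)
      _ ≤ Real.exp (2 * D - 1) / (1 - Real.exp (-(κ - 1))) :=
        le_div_self (Real.exp_pos _).le (by linarith) (by linarith [Real.exp_pos (-(κ - 1))])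
end

section
/- For every natural number n ≥ 0 and every integer k ≥ 1, n(n−1)·((n+1)^k − (n−1)^k) ≥ 2(n+1)^{k+1} − 6(n+1)^k. -/
/-- Scalar inequality underlying Sobolev-regularization of two-photon
dissipation: `n(n-1)((n+1)^k - (n-1)^k) ≥ 2(n+1)^(k+1) - 6(n+1)^k`. -/
theorem two_photon_dissipation_scalar (n : ℕ) (k : ℕ) (hk : 1 ≤ k) :
    (n : ℝ) * ((n : ℝ) - 1) * (((n : ℝ) + 1) ^ k - ((n : ℝ) - 1) ^ k) ≥
      2 * ((n : ℝ) + 1) ^ (k + 1) - 6 * ((n : ℝ) + 1) ^ k := by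
  obtain ⟨m, rfl⟩ : ∃ m, k = m + 1 := ⟨k - 1, by omega⟩
  rcases n with _ | n
  · norm_num
  push_cast
  have hn : (0 : ℝ) ≤ n := n.cast_nonneg
  rw [add_sub_cancel_right]
  have hpow : (n : ℝ) ^ m ≤ ((n : ℝ) + 1 + 1) ^ m := by
    gcongr
    linarith
  have hmul : 0 ≤ ((n : ℝ) + 1) * n * n * (((n : ℝ) + 1 + 1) ^ m - (n : ℝ) ^ m) :=
    mul_nonneg (by positivity) (sub_nonneg.2 hpow)
  have hpos : (0 : ℝ) ≤ ((n : ℝ) + 1 + 1) ^ m := by positivity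
  simp only [pow_succ]
  linear_combination hmul + 4 * hpos
end

section
/- Let k ≥ 2 be a real parameter and ℓ ≥ 1 an integer. Then for all real x, g_ℓ(x−ℓ) ≤ g_ℓ(x). -/
/-- The discrete difference `g_ℓ(x) = f(x) - f(x-ℓ)` of
`f(x) = (x+1)^k · 1_{x ≥ -1}`:
`g_ℓ(x) = (x+1)^k - (x-ℓ+1)^k` for `x ≥ ℓ-1`, `(x+1)^k` for `0 ≤ x < ℓ-1`,
and `0` for `x < 0`. -/
noncomputable def gDiff (k : ℝ) (ℓ : ℕ) (x : ℝ) : ℝ :=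
  if x < 0 then 0
  else if x < (ℓ : ℝ) - 1 then (x + 1) ^ k
  else (x + 1) ^ k - (x - ℓ + 1) ^ k

/-- Midpoint convexity of `t ↦ t ^ k` in difference form. -/
theorem Real.rpow_sub_rpow_sub_le {k a h : ℝ} (hk : 1 ≤ k) (hh : 0 ≤ h) (ha : h ≤ a) :
    a ^ k - (a - h) ^ k ≤ (a + h) ^ k - a ^ k := by
  have hl : a - h ∈ Set.Ici (0 : ℝ) := Set.mem_Ici.2 (by linarith)
  have hr : a + h ∈ Set.Ici (0 : ℝ) := Set.mem_Ici.2 (by linarith)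
  have hc := (convexOn_rpow hk).2 hl hr (show (0 : ℝ) ≤ 1 / 2 by norm_num)
    (show (0 : ℝ) ≤ 1 / 2 by norm_num) (by norm_num)
  simp only [smul_eq_mul] at hc
  rw [show 1 / 2 * (a - h) + 1 / 2 * (a + h) = a by ring] at hc
  linarith

/-- For `k ≥ 0` the discrete difference `g_ℓ` is nonnegative. -/
theorem gDiff_nonneg {k : ℝ} (hk : 0 ≤ k) (ℓ : ℕ) (x : ℝ) : 0 ≤ gDiff k ℓ x := by
  unfold gDiff
  split_ifs with h0 h1
  · exact le_rfl
  · exact Real.rpow_nonneg (by linarith) k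
  · have hℓ : (0 : ℝ) ≤ ℓ := ℓ.cast_nonneg
    exact sub_nonneg.2 (Real.rpow_le_rpow (by linarith) (by linarith) hk)

/-- Monotonicity of `g_ℓ` under shifts: for `k ≥ 2` and `ℓ ≥ 1`,
`g_ℓ(x - ℓ) ≤ g_ℓ(x)` for all real `x`. -/
theorem gDiff_shift_mono (k : ℝ) (hk : 2 ≤ k) (ℓ : ℕ) (hℓ : 1 ≤ ℓ) (x : ℝ) :
    gDiff k ℓ (x - ℓ) ≤ gDiff k ℓ x := by
  rcases lt_or_ge (x - ℓ) 0 with hy | hy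
  · rw [gDiff, if_pos hy]
    exact gDiff_nonneg (by linarith) ℓ x
  have hℓ0 : (0 : ℝ) ≤ ℓ := ℓ.cast_nonneg
  have hx : gDiff k ℓ x = (x + 1) ^ k - (x - ℓ + 1) ^ k := by
    rw [gDiff, if_neg (by linarith), if_neg (by linarith)]
  rw [hx, gDiff, if_neg hy.not_gt]
  have hsplit : x + 1 = x - ℓ + 1 + ℓ := by ring
  split_ifs with h1
  · have hadd := Real.add_rpow_le_rpow_add (p := k) (a := x - ℓ + 1) (b := ℓ)
      (by linarith) hℓ0 (by linarith)
    have hle : (x - ℓ + 1) ^ k ≤ (ℓ : ℝ) ^ k :=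
      Real.rpow_le_rpow (by linarith) (by linarith) (by linarith)
    rw [hsplit]
    linarith
  · have hmid := Real.rpow_sub_rpow_sub_le (k := k) (a := x - ℓ + 1) (h := ℓ)
      (by linarith) hℓ0 (by linarith)
    rwa [← hsplit, show x - ℓ + 1 - ℓ = x - ℓ - ℓ + 1 by ring] at hmid
end

section
/- Let k ≥ 1 be a real parameter and ℓ ≥ 1 an integer. Then ℓ·(x+1)^{k−1} ≤ g_ℓ(x) for all real x ≥ ℓ−1, and (x+1)^k ≤ g_ℓ(x) for all real 0 ≤ x < ℓ−1. -/
/-- The secant bound `(a - b) a^(k-1) ≤ a^k - b^k` for `0 ≤ b ≤ a` and `k ≥ 1`. -/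
theorem sub_mul_rpow_sub_one_le {a b k : ℝ} (hk : 1 ≤ k) (hb : 0 ≤ b) (hab : b ≤ a) :
    (a - b) * a ^ (k - 1) ≤ a ^ k - b ^ k := by
  have rpow_split : ∀ {c : ℝ}, 0 ≤ c → c ^ k = c * c ^ (k - 1) := fun {c} hc => by
    simpa using Real.rpow_add_of_nonneg hc zero_le_one (sub_nonneg.2 hk)
  have hmono : b * b ^ (k - 1) ≤ b * a ^ (k - 1) :=
    mul_le_mul_of_nonneg_left (Real.rpow_le_rpow hb hab (sub_nonneg.2 hk)) hb
  rw [rpow_split hb, rpow_split (hb.trans hab)]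
  linarith

/-- Lower bounds on `g_ℓ` for `k ≥ 1`: `ℓ (x+1)^(k-1) ≤ g_ℓ(x)` for
`x ≥ ℓ-1`, and `(x+1)^k ≤ g_ℓ(x)` for `0 ≤ x < ℓ-1`. -/
theorem gDiff_lower_bounds (k : ℝ) (hk : 1 ≤ k) (ℓ : ℕ) (hℓ : 1 ≤ ℓ) :
    (∀ x : ℝ, (ℓ : ℝ) - 1 ≤ x → (ℓ : ℝ) * (x + 1) ^ (k - 1) ≤ gDiff k ℓ x) ∧
    (∀ x : ℝ, 0 ≤ x → x < (ℓ : ℝ) - 1 → (x + 1) ^ k ≤ gDiff k ℓ x) := by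
  have hℓ' : (1 : ℝ) ≤ ℓ := by exact_mod_cast hℓ
  refine ⟨fun x hx => ?_, fun x hx₀ hx => ?_⟩
  · rw [gDiff, if_neg (by linarith), if_neg (by linarith)]
    have h := sub_mul_rpow_sub_one_le (a := x + 1) (b := x - ℓ + 1) hk
      (by linarith) (by linarith)
    rwa [show x + 1 - (x - ℓ + 1) = (ℓ : ℝ) by ring] at h
  · rw [gDiff, if_neg (by linarith), if_pos hx]
end
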